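/- Suppose G is connected. Then every optimal solution X of the SDP relaxation min{⟨L̂, X⟩ : X positive semidefinite, SBD(X) = I_{rn}} satisfies tr(X (Z Zᵀ)ᵀ) ≥ (1 − 4‖Δ‖²/λ₂²) · n² r. -/

import Mathlib

open Matrix MeasureTheory ProbabilityTheory
open scoped Kronecker BigOperators

namespace SyncPaper

variable {α : Type*}

/-- The `i`-th `r × p` row-block of a block matrix `Y ∈ α^{rn × p}`. -/
def blk {n r p : ℕ} (Y : Matrix (Fin n × Fin r) (Fin p) α) (i : Fin n) :
    Matrix (Fin r) (Fin p) α :=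
  Matrix.of fun a b => Y (i, a) b

/-- `Y` is feasible: every `r × p` row-block has orthonormal rows. -/
def Feasible {n r p : ℕ} (Y : Matrix (Fin n × Fin r) (Fin p) ℝ) : Prop :=
  ∀ i, blk Y i * (blk Y i)ᵀ = 1

/-- Symmetric block-diagonal projection: keeps the symmetric part of each `r × r`
diagonal block and zeroes out all off-diagonal blocks. -/
noncomputable def SBD {n r : ℕ} (M : Matrix (Fin n × Fin r) (Fin n × Fin r) ℝ) :
    Matrix (Fin n × Fin r) (Fin n × Fin r) ℝ :=
  Matrix.of fun q q' => if q.1 = q'.1 then (M q q' + M q' q) / 2 else 0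

/-- The matrix `S(Y) = L̂ − SBD(L̂ Y Yᵀ)`. -/
noncomputable def Smat {n r p : ℕ} (Lhat : Matrix (Fin n × Fin r) (Fin n × Fin r) ℝ)
    (Y : Matrix (Fin n × Fin r) (Fin p) ℝ) :
    Matrix (Fin n × Fin r) (Fin n × Fin r) ℝ :=
  Lhat - SBD (Lhat * Y * Yᵀ)

/-- Second-order critical point of the rank-`p` problem `min ⟨L̂, Y Yᵀ⟩` over feasible `Y`. -/
def IsSecondOrderCritical {n r p : ℕ} (Lhat : Matrix (Fin n × Fin r) (Fin n × Fin r) ℝ)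
    (Y : Matrix (Fin n × Fin r) (Fin p) ℝ) : Prop :=
  Feasible Y ∧ Smat Lhat Y * Y = 0 ∧
    ∀ Ydot : Matrix (Fin n × Fin r) (Fin p) ℝ,
      (∀ i, blk Ydot i * (blk Y i)ᵀ + blk Y i * (blk Ydot i)ᵀ = 0) →
      0 ≤ (Smat Lhat Y * Ydot * Ydotᵀ).trace

/-- The stacked ground truth `Z ∈ ℝ^{rn × r}`. -/
def Zstack {n r : ℕ} (Zb : Fin n → Matrix (Fin r) (Fin r) ℝ) :
    Matrix (Fin n × Fin r) (Fin r) ℝ :=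
  Matrix.of fun q b => Zb q.1 q.2 b

/-- The block-diagonal matrix `D` with diagonal blocks `Z_1, …, Z_n`. -/
def Dmat {n r : ℕ} (Zb : Fin n → Matrix (Fin r) (Fin r) ℝ) :
    Matrix (Fin n × Fin r) (Fin n × Fin r) ℝ :=
  Matrix.of fun q q' => if q.1 = q'.1 then Zb q.1 q.2 q'.2 else 0

/-- `L_Z = D (L ⊗ I_r) Dᵀ`. -/
def LZmat {n r : ℕ} (L : Matrix (Fin n) (Fin n) ℝ) (Zb : Fin n → Matrix (Fin r) (Fin r) ℝ) :
    Matrix (Fin n × Fin r) (Fin n × Fin r) ℝ :=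
  Dmat Zb * (L ⊗ₖ (1 : Matrix (Fin r) (Fin r) ℝ)) * (Dmat Zb)ᵀ

/-- The ℓ₂→ℓ₂ operator norm of a matrix. -/
noncomputable def opNorm {m m' : Type*} [Fintype m] [Fintype m'] [DecidableEq m']
    (M : Matrix m m' ℝ) : ℝ :=
  ‖(Matrix.toEuclideanLin (𝕜 := ℝ) (m := m) (n := m')).trans
      LinearMap.toContinuousLinearMap M‖

/-- The second-smallest eigenvalue of a connected graph Laplacian, via the variational
(Courant–Fischer) characterization: the minimum of the quadratic form over unit vectors
orthogonal to the all-ones vector. -/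
noncomputable def lam2 {n : ℕ} (L : Matrix (Fin n) (Fin n) ℝ) : ℝ :=
  sInf {t : ℝ | ∃ x : Fin n → ℝ, (∑ i, x i = 0) ∧ (∑ i, (x i) ^ 2 = 1) ∧ t = x ⬝ᵥ (L *ᵥ x)}

/-- Squared Frobenius norm of a real matrix. -/
def frobSq {m m' : Type*} [Fintype m] [Fintype m'] (M : Matrix m m' ℝ) : ℝ :=
  ∑ i, ∑ j, (M i j) ^ 2

/-- The inner product `⟨A, B⟩ = tr(A Bᵀ)`. -/
def ip {m : Type*} [Fintype m] (A B : Matrix m m ℝ) : ℝ := (A * Bᵀ).trace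

/-- Feasibility for the SDP relaxation. -/
def SDPFeasible {n r : ℕ} (X : Matrix (Fin n × Fin r) (Fin n × Fin r) ℝ) : Prop :=
  X.PosSemidef ∧ SBD X = 1

end SyncPaper

namespace SyncPaper

set_option linter.unusedSectionVars false
set_option linter.unusedSimpArgs false

section helpers
variable {ι : Type*} [Fintype ι] [DecidableEq ι]

lemma psd_trace_mul_nonneg {P Q : Matrix ι ι ℝ} (hP : P.PosSemidef) (hQ : Q.PosSemidef) :
    0 ≤ (P * Q).trace := by
  obtain ⟨m, v, rfl⟩ := Matrix.posSemidef_iff_eq_sum_vecMulVec.mp hQ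
  rw [Matrix.mul_sum, Matrix.trace_sum]
  refine Finset.sum_nonneg fun k _ => ?_
  rw [Matrix.mul_vecMulVec, Matrix.trace_vecMulVec, dotProduct_comm]
  exact hP.dotProduct_mulVec_nonneg (v k)

lemma opNorm_nonneg' (M : Matrix ι ι ℝ) : 0 ≤ opNorm M := norm_nonneg _

lemma dot_mulVec_le (M : Matrix ι ι ℝ) (x y : ι → ℝ) :
    x ⬝ᵥ (M *ᵥ y) ≤ opNorm M * (√(x ⬝ᵥ x) * √(y ⬝ᵥ y)) := by
  have key : ∀ v : ι → ℝ, ‖(WithLp.toLp 2 v : EuclideanSpace ℝ ι)‖ = √(v ⬝ᵥ v) := by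
    intro v
    rw [EuclideanSpace.norm_eq]
    congr 1
    simp [dotProduct, pow_two]
  have h1 := ((Matrix.toEuclideanLin (𝕜 := ℝ) (m := ι) (n := ι)).trans
      LinearMap.toContinuousLinearMap M).le_opNorm (WithLp.toLp 2 y)
  have h2 := real_inner_le_norm (WithLp.toLp 2 x : EuclideanSpace ℝ ι) (WithLp.toLp 2 (M *ᵥ y))
  have h3 : inner ℝ (WithLp.toLp 2 x : EuclideanSpace ℝ ι) (WithLp.toLp 2 (M *ᵥ y))
      = x ⬝ᵥ (M *ᵥ y) := by
    simp [EuclideanSpace.inner_eq_star_dotProduct, dotProduct_comm]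
  have h4 : ((Matrix.toEuclideanLin (𝕜 := ℝ) (m := ι) (n := ι)).trans
      LinearMap.toContinuousLinearMap M) (WithLp.toLp 2 y) = WithLp.toLp 2 (M *ᵥ y) := by
    simp
  rw [h4, key y] at h1
  rw [h3, key x] at h2
  calc _ ≤ _ := h2
    _ ≤ √(x ⬝ᵥ x) * (opNorm M * √(y ⬝ᵥ y)) := by
      gcongr
      exact h1
    _ = _ := by ring

lemma dot_self_nonneg (x : ι → ℝ) : 0 ≤ x ⬝ᵥ x :=
  Finset.sum_nonneg fun i _ => mul_self_nonneg (x i)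

lemma dot_mulVec_symm {M : Matrix ι ι ℝ} (hM : Mᵀ = M) (x y : ι → ℝ) :
    x ⬝ᵥ (M *ᵥ y) = y ⬝ᵥ (M *ᵥ x) := by
  rw [dotProduct_mulVec, ← mulVec_transpose, hM, dotProduct_comm]

lemma trace_mul_psd_le {D P : Matrix ι ι ℝ} (hD : Dᵀ = D) (hP : P.PosSemidef) :
    (D * P).trace ≤ opNorm D * P.trace := by
  have h : (opNorm D • (1 : Matrix ι ι ℝ) - D).PosSemidef := by
    apply Matrix.PosSemidef.of_dotProduct_mulVec_nonneg
    · simp [Matrix.IsHermitian, Matrix.conjTranspose_eq_transpose_of_trivial, hD]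
    · intro x
      have := dot_mulVec_le D x x
      rw [Real.mul_self_sqrt (dot_self_nonneg x)] at this
      simp [sub_mulVec, smul_mulVec, dotProduct_sub]
      linarith
  have := psd_trace_mul_nonneg h hP
  simp [sub_mul] at this
  linarith

/-- `‖X z‖² ≤ n zᵀ X z` when `0 ⪯ X ⪯ n I`. -/
lemma norm_mulVec_le {X : Matrix ι ι ℝ} (hX : X.PosSemidef) {N : ℝ}
    (hN : ∀ x : ι → ℝ, x ⬝ᵥ (X *ᵥ x) ≤ N * (x ⬝ᵥ x)) (z : ι → ℝ) :
    (X *ᵥ z) ⬝ᵥ (X *ᵥ z) ≤ N * (z ⬝ᵥ (X *ᵥ z)) := by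
  have hXs : Xᵀ = X := by
    have := hX.1
    rwa [Matrix.IsHermitian, Matrix.conjTranspose_eq_transpose_of_trivial] at this
  set w := X *ᵥ z with hw
  set A := w ⬝ᵥ w with hA
  set Q := z ⬝ᵥ w with hQ
  have hA0 : 0 ≤ A := dot_self_nonneg w
  have hwz : z ⬝ᵥ (X *ᵥ w) = A := by rw [dot_mulVec_symm hXs]
  have hW := hN w
  have hquad : ∀ t : ℝ, 0 ≤ N * A - 2 * t * A + t ^ 2 * Q := by
    intro t
    have := hX.dotProduct_mulVec_nonneg (w - t • z)
    simp only [star_trivial, mulVec_sub, mulVec_smul, dotProduct_sub, sub_dotProduct,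
      smul_dotProduct, dotProduct_smul, smul_eq_mul, hwz, ← hw] at this
    rw [← hA, ← hQ] at this
    nlinarith
  have hQ0 : 0 ≤ Q := by simpa using hX.dotProduct_mulVec_nonneg z
  rcases hA0.eq_or_lt with h0 | h0
  · have := hN z
    rw [← hw] at this
    have h2 := dot_self_nonneg z
    -- w = 0, so Q = 0
    have hw0 : w = 0 := dotProduct_self_eq_zero.mp h0.symm
    have : Q = 0 := by rw [hQ, hw0, dotProduct_zero]
    rw [← h0, this]; simp
  · rcases hQ0.eq_or_lt with q0 | q0
    · exfalso
      have h := hquad ((N + 1) / 2)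
      rw [← q0] at h
      nlinarith
    · have h := hquad (A / Q)
      have e : N * A - 2 * (A / Q) * A + (A / Q) ^ 2 * Q = A * (N - A / Q) := by
        field_simp; ring
      rw [e] at h
      have h2 : 0 ≤ N - A / Q := by
        by_contra hc
        push Not at hc
        nlinarith
      have h3 : A / Q ≤ N := by linarith
      rwa [div_le_iff₀ q0] at h3

lemma scalar_bound {N a s : ℝ} (ha0 : 0 ≤ a) (haN : a ≤ N) (hs : s ^ 2 ≤ N * a) :
    (N - a) + √(a - 2 * s + N) * √(a + 2 * s + N) ≤ 2 * √(N ^ 2 - s ^ 2) := by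
  set t := √(N ^ 2 - s ^ 2) with ht
  have ht0 : 0 ≤ t := Real.sqrt_nonneg _
  have h1 : 0 ≤ N ^ 2 - s ^ 2 := by nlinarith
  have htt : t ^ 2 = N ^ 2 - s ^ 2 := Real.sq_sqrt h1
  have htN : t ≤ N := by
    apply abs_le_of_sq_le_sq' _ (by linarith) |>.2
    nlinarith [sq_nonneg s]
  have hta : N - a ≤ t := by
    apply abs_le_of_sq_le_sq' _ ht0 |>.2
    nlinarith
  have hp : 0 ≤ a - 2 * s + N := by
    have h4 : (2 * s) ^ 2 ≤ (a + N) ^ 2 := by nlinarith [sq_nonneg (a - N)]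
    have := abs_le_of_sq_le_sq' h4 (by linarith)
    linarith [this.2]
  rw [← Real.sqrt_mul hp]
  have : √((a - 2 * s + N) * (a + 2 * s + N)) ≤ 2 * t + a - N := by
    apply Real.sqrt_le_iff.mpr ⟨by linarith, ?_⟩
    nlinarith [mul_nonneg (sub_nonneg.2 haN) (sub_nonneg.2 htN)]
  linarith

lemma core_diag {r : ℕ} {X D : Matrix ι ι ℝ} (hX : X.PosSemidef) (hD : Dᵀ = D) {N : ℝ}
    (hN : ∀ x : ι → ℝ, x ⬝ᵥ (X *ᵥ x) ≤ N * (x ⬝ᵥ x))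
    (hN0 : 0 ≤ N) (htr : X.trace = N * r) (W : Matrix ι (Fin r) ℝ) (hW : Wᵀ * W = N • 1)
    (m : Fin r → ℝ) (hm : Wᵀ * X * W = diagonal m) :
    (D * (X - W * Wᵀ)).trace ≤ opNorm D * ∑ k, 2 * √(N ^ 2 - m k) ∧ ∀ k, m k ≤ N ^ 2 := by
  have hXs : Xᵀ = X := by
    have := hX.1
    rwa [Matrix.IsHermitian, Matrix.conjTranspose_eq_transpose_of_trivial] at this
  set z : Fin r → ι → ℝ := fun k q => W q k with hz
  have hmk : ∀ k, m k = z k ⬝ᵥ (X *ᵥ z k) := by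
    intro k
    have := congrFun (congrFun hm k) k
    rw [diagonal_apply_eq] at this
    rw [← this, Matrix.mul_assoc]
    simp [Matrix.mul_apply, dotProduct, mulVec, hz]
  have hm0 : ∀ k, 0 ≤ m k := fun k => by
    rw [hmk]; simpa using hX.dotProduct_mulVec_nonneg (z k)
  have hzz : ∀ k, z k ⬝ᵥ z k = N := by
    intro k
    have := congrFun (congrFun hW k) k
    simpa [Matrix.mul_apply, dotProduct, hz] using this
  set s : Fin r → ℝ := fun k => √(m k) with hs
  have hss : ∀ k, s k ^ 2 = m k := fun k => Real.sq_sqrt (hm0 k)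
  set y : Fin r → ι → ℝ := fun k => (s k)⁻¹ • (X *ᵥ z k) with hy
  set a : Fin r → ℝ := fun k => y k ⬝ᵥ y k with ha
  have ha0 : ∀ k, 0 ≤ a k := fun k => dot_self_nonneg _
  have hzy : ∀ k, z k ⬝ᵥ y k = s k := by
    intro k
    simp only [hy, dotProduct_smul, ← hmk, smul_eq_mul]
    rw [← hss k]
    by_cases h : s k = 0
    · simp [h]
    · field_simp
  have haN : ∀ k, a k ≤ N := by
    intro k
    simp only [ha, hy, dotProduct_smul, smul_dotProduct, smul_eq_mul]
    have := norm_mulVec_le hX hN (z k)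
    rw [← hmk, ← hss] at this
    by_cases h : s k = 0
    · simp [h, hN0]
    · have h2 : 0 < s k ^ 2 := by positivity
      calc _ = (X *ᵥ z k ⬝ᵥ X *ᵥ z k) / s k ^ 2 := by field_simp
        _ ≤ N := by rwa [div_le_iff₀ h2]
  have hsa : ∀ k, s k ^ 2 ≤ N * a k := by
    intro k
    have := Finset.sum_mul_sq_le_sq_mul_sq Finset.univ (z k) (y k)
    rw [← hzy k, ← hzz k]
    simpa [ha, dotProduct, pow_two] using this
  -- the remainder
  set E := diagonal (fun k => (m k)⁻¹) with hE
  set Y : Matrix ι (Fin r) ℝ := X * W * diagonal (fun k => (s k)⁻¹) with hY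
  have hYy : ∀ q k, Y q k = y k q := by
    intro q k
    simp only [hY, Matrix.mul_diagonal, hy, Pi.smul_apply, smul_eq_mul]
    rw [mul_comm]; rfl
  have hYY : Y * Yᵀ = X * W * E * Wᵀ * X := by
    have : E = diagonal (fun k => (s k)⁻¹) * diagonal (fun k => (s k)⁻¹) := by
      rw [diagonal_mul_diagonal, hE]
      congr 1; ext k
      rw [← hss k, pow_two, mul_inv]
    rw [hY, this]
    simp only [transpose_mul, diagonal_transpose, hXs, Matrix.mul_assoc]
  have hP : (X - Y * Yᵀ).PosSemidef := by
    have h := hX.conjTranspose_mul_mul_same (1 - W * E * Wᵀ * X)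
    convert h using 1
    have hEE : E * (Wᵀ * X * W) * E = E := by
      rw [hm, hE, diagonal_mul_diagonal, diagonal_mul_diagonal]
      congr 1; ext k
      by_cases h : m k = 0
      · simp [h]
      · field_simp
    have hEt : Eᵀ = E := by rw [hE, diagonal_transpose]
    have h3 : X * W * E * Wᵀ * X * (W * E * Wᵀ * X) = X * W * E * Wᵀ * X := by
      calc _ = X * W * (E * (Wᵀ * X * W) * E) * Wᵀ * X := by simp only [Matrix.mul_assoc]
        _ = _ := by rw [hEE]
    rw [hYY, Matrix.conjTranspose_eq_transpose_of_trivial]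
    have h4 : (1 - W * E * Wᵀ * X)ᵀ * X = X - X * W * E * Wᵀ * X := by
      simp only [transpose_sub, transpose_one, transpose_mul, transpose_transpose, hXs, hEt,
        sub_mul, one_mul, Matrix.mul_assoc]
    rw [h4, mul_sub, mul_one, sub_mul, h3]
    simp only [Matrix.mul_assoc]
    abel
  have htP : (X - Y * Yᵀ).trace = ∑ k, (N - a k) := by
    rw [trace_sub, htr, trace_mul_comm]
    simp [trace, Matrix.mul_apply, hYy, ha, dotProduct, mul_comm]
  have hcol : ∀ (V : Matrix ι (Fin r) ℝ) (v : Fin r → ι → ℝ), (∀ q k, V q k = v k q) →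
      (D * (V * Vᵀ)).trace = ∑ k, v k ⬝ᵥ (D *ᵥ v k) := by
    intro V v hv
    rw [← Matrix.mul_assoc, trace_mul_comm]
    simp [trace, Matrix.mul_apply, dotProduct, mulVec, hv]
  have hsplit : (D * (X - W * Wᵀ)).trace = (D * (X - Y * Yᵀ)).trace
      + ∑ k, (y k - z k) ⬝ᵥ (D *ᵥ (y k + z k)) := by
    have : X - W * Wᵀ = (X - Y * Yᵀ) + (Y * Yᵀ - W * Wᵀ) := by abel
    rw [this, mul_add, trace_add, mul_sub D (Y * Yᵀ), trace_sub, hcol Y y hYy,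
      hcol W z (fun _ _ => rfl), ← Finset.sum_sub_distrib]
    congr 1
    refine Finset.sum_congr rfl fun k _ => ?_
    rw [mulVec_add, dotProduct_add, sub_dotProduct, sub_dotProduct, dot_mulVec_symm hD (z k) (y k)]
    ring
  constructor
  · have h1 := trace_mul_psd_le hD hP
    rw [htP] at h1
    have h2 : ∀ k, (y k - z k) ⬝ᵥ (D *ᵥ (y k + z k)) ≤
        opNorm D * (√(a k - 2 * s k + N) * √(a k + 2 * s k + N)) := by
      intro k
      have := dot_mulVec_le D (y k - z k) (y k + z k)
      have e1 : (y k - z k) ⬝ᵥ (y k - z k) = a k - 2 * s k + N := by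
        simp only [sub_dotProduct, dotProduct_sub, hzz, hzy, dotProduct_comm (y k) (z k), ha]; ring
      have e2 : (y k + z k) ⬝ᵥ (y k + z k) = a k + 2 * s k + N := by
        simp only [add_dotProduct, dotProduct_add, hzz, hzy, dotProduct_comm (y k) (z k), ha]; ring
      rwa [e1, e2] at this
    calc _ ≤ opNorm D * ∑ k, (N - a k)
          + ∑ k, opNorm D * (√(a k - 2 * s k + N) * √(a k + 2 * s k + N)) := by
          rw [hsplit]
          exact add_le_add h1 (Finset.sum_le_sum fun k _ => h2 k)
      _ = opNorm D * ∑ k, ((N - a k) + √(a k - 2 * s k + N) * √(a k + 2 * s k + N)) := by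
          rw [← Finset.mul_sum, ← mul_add, Finset.sum_add_distrib]
      _ ≤ _ := by
          apply mul_le_mul_of_nonneg_left _ (opNorm_nonneg' D)
          refine Finset.sum_le_sum fun k _ => ?_
          rw [← hss k]
          exact scalar_bound (ha0 k) (haN k) (hsa k)
  · intro k
    have := hsa k
    rw [hss] at this
    nlinarith [haN k]

lemma core {r : ℕ} {X D : Matrix ι ι ℝ} (hX : X.PosSemidef) (hD : Dᵀ = D) {N : ℝ}
    (hN : ∀ x : ι → ℝ, x ⬝ᵥ (X *ᵥ x) ≤ N * (x ⬝ᵥ x))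
    (hN0 : 0 ≤ N) (htr : X.trace = N * r) (Z : Matrix ι (Fin r) ℝ) (hZ : Zᵀ * Z = N • 1) :
    ∃ S : ℝ, (D * (X - Z * Zᵀ)).trace ≤ opNorm D * S ∧
      S ^ 2 ≤ 4 * r * (N ^ 2 * r - (X * (Z * Zᵀ)).trace) := by
  have hM : (Zᵀ * X * Z).IsHermitian := by
    have := (hX.conjTranspose_mul_mul_same Z).1
    rwa [Matrix.conjTranspose_eq_transpose_of_trivial] at this
  set U : Matrix (Fin r) (Fin r) ℝ := hM.eigenvectorUnitary.1 with hU
  have hUU : U * Uᵀ = 1 := by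
    have := Matrix.mem_unitaryGroup_iff.mp hM.eigenvectorUnitary.2
    rwa [Matrix.star_eq_conjTranspose, Matrix.conjTranspose_eq_transpose_of_trivial] at this
  have hUU' : Uᵀ * U = 1 := mul_eq_one_comm.mp hUU
  have hsp : Zᵀ * X * Z = U * diagonal hM.eigenvalues * Uᵀ := by
    have := hM.spectral_theorem
    rw [Unitary.conjStarAlgAut_apply] at this
    rw [Matrix.star_eq_conjTranspose, Matrix.conjTranspose_eq_transpose_of_trivial] at this
    exact this
  have hWW : (Z * U) * (Z * U)ᵀ = Z * Zᵀ := by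
    rw [transpose_mul, Matrix.mul_assoc, ← Matrix.mul_assoc U, hUU, Matrix.one_mul]
  have hdiag : (Z * U)ᵀ * X * (Z * U) = diagonal hM.eigenvalues := by
    calc _ = Uᵀ * (Zᵀ * X * Z) * U := by simp only [transpose_mul, Matrix.mul_assoc]
      _ = (Uᵀ * U) * diagonal hM.eigenvalues * (Uᵀ * U) := by
        refine (congrArg (fun M => Uᵀ * M * U) hsp).trans ?_
        simp only [Matrix.mul_assoc]
      _ = _ := by rw [hUU', one_mul, mul_one]
  have hWN : (Z * U)ᵀ * (Z * U) = N • 1 := by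
    calc _ = Uᵀ * (Zᵀ * Z) * U := by simp only [transpose_mul, Matrix.mul_assoc]
      _ = _ := by rw [hZ]; simp [hUU']
  obtain ⟨h1, h2⟩ := core_diag hX hD hN hN0 htr (Z * U) hWN _ hdiag
  rw [hWW] at h1
  refine ⟨_, h1, ?_⟩
  have hf : (X * (Z * Zᵀ)).trace = ∑ k, hM.eigenvalues k := by
    have := hM.trace_eq_sum_eigenvalues
    have h5 : (Zᵀ * X * Z).trace = (X * (Z * Zᵀ)).trace := by
      rw [Matrix.mul_assoc, trace_mul_comm, Matrix.mul_assoc]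
    rw [← h5]
    simpa using this
  have h3 := @sq_sum_le_card_mul_sum_sq (Fin r) ℝ _ _ _ _ Finset.univ
    (fun k => 2 * √(N ^ 2 - hM.eigenvalues k))
  refine h3.trans (le_of_eq ?_)
  have : ∀ k, (2 * √(N ^ 2 - hM.eigenvalues k)) ^ 2 = 4 * (N ^ 2 - hM.eigenvalues k) := by
    intro k
    rw [mul_pow, Real.sq_sqrt (by linarith [h2 k])]; norm_num
  simp only [this, ← Finset.mul_sum, Finset.sum_sub_distrib, hf]
  simp
  ring

end helpers

section graph
variable {n : ℕ} (G : SimpleGraph (Fin n)) [DecidableRel G.Adj]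

lemma lap_quad (x : Fin n → ℝ) : x ⬝ᵥ (G.lapMatrix ℝ *ᵥ x)
    = (∑ i, ∑ j, if G.Adj i j then (x i - x j) ^ 2 else 0) / 2 := by
  rw [← SimpleGraph.lapMatrix_toLinearMap₂', Matrix.toLinearMap₂'_apply']

lemma lap_quad_nonneg (x : Fin n → ℝ) : 0 ≤ x ⬝ᵥ (G.lapMatrix ℝ *ᵥ x) := by
  rw [lap_quad]
  refine div_nonneg (Finset.sum_nonneg fun i _ => Finset.sum_nonneg fun j _ => ?_) (by norm_num)
  split_ifs
  · positivity
  · exact le_rfl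

lemma lam2_le (hn : 1 ≤ n) (x : Fin n → ℝ) :
    lam2 (G.lapMatrix ℝ) * (∑ i, x i ^ 2 - (∑ i, x i) ^ 2 / n) ≤ x ⬝ᵥ (G.lapMatrix ℝ *ᵥ x) := by
  have hn0 : (n : ℝ) ≠ 0 := by positivity
  set c := (∑ i, x i) / n with hc
  set v := ∑ i, x i ^ 2 - (∑ i, x i) ^ 2 / n with hv
  have hcn : c * n = ∑ i, x i := by rw [hc]; field_simp
  have hsum : ∑ i, (x i - c) = 0 := by
    rw [Finset.sum_sub_distrib]; simp; linarith
  have hsq : ∑ i, (x i - c) ^ 2 = v := by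
    have : ∀ i, (x i - c) ^ 2 = x i ^ 2 - 2 * c * x i + c ^ 2 := fun i => by ring
    simp only [this, Finset.sum_add_distrib, Finset.sum_sub_distrib, ← Finset.mul_sum]
    simp only [Finset.sum_const, Finset.card_univ, Fintype.card_fin, nsmul_eq_mul]
    rw [hv, ← hcn]; field_simp; ring
  have hv0 : 0 ≤ v := by rw [← hsq]; positivity
  rcases hv0.eq_or_lt with h | h
  · rw [← h, mul_zero]; exact lap_quad_nonneg G x
  · have hle : lam2 (G.lapMatrix ℝ) ≤ (x ⬝ᵥ (G.lapMatrix ℝ *ᵥ x)) / v := by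
      apply csInf_le
      · refine ⟨0, ?_⟩
        rintro t ⟨x, -, -, rfl⟩
        exact lap_quad_nonneg G x
      · refine ⟨fun i => (x i - c) / √v, ?_, ?_, ?_⟩
        · rw [← Finset.sum_div, hsum, zero_div]
        · simp only [div_pow, Real.sq_sqrt hv0]
          rw [← Finset.sum_div, hsq, div_self h.ne']
        · rw [lap_quad, lap_quad, div_right_comm, Finset.sum_div]
          congr 1
          refine Finset.sum_congr rfl fun i _ => ?_
          rw [Finset.sum_div]
          refine Finset.sum_congr rfl fun j _ => ?_
          split_ifs
          · rw [← sub_div, div_pow, Real.sq_sqrt hv0]; congr 2; ring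
          · simp
    rwa [le_div_iff₀ h] at hle

lemma lam2_pos (hn : 2 ≤ n) (hG : G.Connected) : 0 < lam2 (G.lapMatrix ℝ) := by
  set K : Set (Fin n → ℝ) := {x | (∑ i, x i = 0) ∧ (∑ i, (x i) ^ 2 = 1)} with hK
  have hcl : IsClosed K :=
    (isClosed_eq (by fun_prop) continuous_const).inter (isClosed_eq (by fun_prop) continuous_const)
  have hbd : K ⊆ Metric.closedBall 0 1 := by
    rintro x ⟨-, hx⟩
    rw [mem_closedBall_zero_iff, pi_norm_le_iff_of_nonneg zero_le_one]
    intro i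
    rw [Real.norm_eq_abs, ← sq_le_one_iff_abs_le_one, ← hx]
    exact Finset.single_le_sum (f := fun i => x i ^ 2) (fun j _ => sq_nonneg (x j))
      (Finset.mem_univ i)
  have hcpt : IsCompact K := (isCompact_closedBall _ _).of_isClosed_subset hcl hbd
  have hne : K.Nonempty := by
    let p : Fin n := ⟨0, by omega⟩
    let q : Fin n := ⟨1, by omega⟩
    have hpq : p ≠ q := by simp [p, q, Fin.ext_iff]
    refine ⟨fun i => if i = p then (√2)⁻¹ else if i = q then -(√2)⁻¹ else 0, ?_, ?_⟩
    · have : ∀ i, (if i = p then (√2)⁻¹ else if i = q then -(√2)⁻¹ else (0:ℝ))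
          = (if i = p then (√2)⁻¹ else 0) + (if i = q then -(√2)⁻¹ else 0) := by
        intro i; by_cases h : i = p
        · simp [h, hpq]
        · simp [h]
      simp only [this, Finset.sum_add_distrib]
      simp
    · have : ∀ i, (if i = p then (√2)⁻¹ else if i = q then -(√2)⁻¹ else (0:ℝ)) ^ 2
          = (if i = p then 1 / 2 else 0) + (if i = q then 1 / 2 else 0) := by
        intro i; by_cases h : i = p
        · simp [h, hpq]
        · by_cases h' : i = q
          · simp [h', hpq.symm]
          · simp [h, h']
      simp only [this, Finset.sum_add_distrib]
      simp
      norm_num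
  have hcont : ContinuousOn (fun x : Fin n → ℝ => x ⬝ᵥ (G.lapMatrix ℝ *ᵥ x)) K := by
    apply Continuous.continuousOn
    simp only [dotProduct, mulVec]
    fun_prop
  obtain ⟨x0, hx0, hmin⟩ := hcpt.exists_isMinOn hne hcont
  have hle : x0 ⬝ᵥ (G.lapMatrix ℝ *ᵥ x0) ≤ lam2 (G.lapMatrix ℝ) := by
    apply le_csInf
    · exact ⟨_, x0, hx0.1, hx0.2, rfl⟩
    · rintro t ⟨x, h1, h2, rfl⟩
      exact hmin (show x ∈ K from ⟨h1, h2⟩)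
  refine lt_of_lt_of_le ?_ hle
  refine lt_of_le_of_ne (lap_quad_nonneg G x0) fun h => ?_
  have h' := (SimpleGraph.lapMatrix_toLinearMap₂'_apply'_eq_zero_iff_forall_reachable G x0).mp
    (by rw [Matrix.toLinearMap₂'_apply']; exact h.symm)
  have hconst : ∀ i j, x0 i = x0 j := fun i j => h' i j (hG.preconnected i j)
  have hz : ∀ i, x0 i = 0 := by
    intro i
    have h1 := hx0.1
    rw [Finset.sum_congr rfl (fun j _ => hconst j i)] at h1
    simp at h1
    rcases h1 with h1 | h1
    · omega
    · exact h1
  have h2 := hx0.2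
  simp [hz] at h2

end graph

section blocks
variable {n r : ℕ}

lemma feas_block {X : Matrix (Fin n × Fin r) (Fin n × Fin r) ℝ} (hX : SDPFeasible X)
    (i : Fin n) (a b : Fin r) : X (i, a) (i, b) = if a = b then 1 else 0 := by
  have h := congrFun (congrFun hX.2 (i, a)) (i, b)
  have hs : X (i, b) (i, a) = X (i, a) (i, b) := by
    simpa using hX.1.1.apply (i, a) (i, b)
  simp only [SBD, Matrix.of_apply, if_true, hs, Matrix.one_apply, Prod.mk.injEq, true_and] at h
  rw [← h]; ring

lemma feas_le {X : Matrix (Fin n × Fin r) (Fin n × Fin r) ℝ} (hX : SDPFeasible X)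
    (x : Fin n × Fin r → ℝ) : x ⬝ᵥ (X *ᵥ x) ≤ n * (x ⬝ᵥ x) := by
  set e : Fin n → (Fin n × Fin r → ℝ) := fun i q => if q.1 = i then x q else 0 with he
  have hx : x = ∑ i, e i := by
    ext q; simp [he]
  set B : Fin n → Fin n → ℝ := fun i j => e i ⬝ᵥ (X *ᵥ e j) with hB
  have hBii : ∀ i, B i i = ∑ a, x (i, a) ^ 2 := by
    intro i
    simp only [hB, he, dotProduct, mulVec, Fintype.sum_prod_type]
    simp [feas_block hX, pow_two]
  have hxx : x ⬝ᵥ x = ∑ i, B i i := by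
    simp [hBii, dotProduct, Fintype.sum_prod_type, pow_two]
  have hq : x ⬝ᵥ (X *ᵥ x) = ∑ i, ∑ j, B i j := by
    conv_lhs => rw [hx]
    simp only [hB, mulVec_sum, dotProduct_sum, sum_dotProduct]
    exact Finset.sum_comm
  have hps : ∀ i j, B i j + B j i ≤ B i i + B j j := by
    intro i j
    have := hX.1.dotProduct_mulVec_nonneg (e i - e j)
    simp only [star_trivial, mulVec_sub, dotProduct_sub, sub_dotProduct] at this
    simp only [hB]
    linarith
  have h2 : ∑ i, ∑ j, (B i j + B j i) ≤ ∑ i, ∑ j, (B i i + B j j) :=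
    Finset.sum_le_sum fun i _ => Finset.sum_le_sum fun j _ => hps i j
  simp only [Finset.sum_add_distrib] at h2
  rw [Finset.sum_comm (f := fun i j => B j i)] at h2
  simp only [Finset.sum_const, Finset.card_univ, Fintype.card_fin, nsmul_eq_mul,
    ← Finset.mul_sum] at h2
  rw [hq, hxx]
  linarith

lemma feas_trace {X : Matrix (Fin n × Fin r) (Fin n × Fin r) ℝ} (hX : SDPFeasible X) :
    X.trace = n * r := by
  simp [trace, Fintype.sum_prod_type, feas_block hX]

variable {Zb : Fin n → Matrix (Fin r) (Fin r) ℝ}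

lemma Z_rows (hZb : ∀ i, Zb i * (Zb i)ᵀ = 1) (i : Fin n) (a b : Fin r) :
    ∑ k, Zb i a k * Zb i b k = if a = b then 1 else 0 := by
  have := congrFun (congrFun (hZb i) a) b
  simpa [Matrix.mul_apply, Matrix.one_apply] using this

lemma Z_cols (hZb : ∀ i, Zb i * (Zb i)ᵀ = 1) (i : Fin n) (a b : Fin r) :
    ∑ k, Zb i k a * Zb i k b = if a = b then 1 else 0 := by
  have h0 : (Zb i)ᵀ * Zb i = 1 := mul_eq_one_comm.mp (hZb i)
  have := congrFun (congrFun h0 a) b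
  simpa [Matrix.mul_apply, Matrix.one_apply] using this

lemma Z_feas (hZb : ∀ i, Zb i * (Zb i)ᵀ = 1) : SDPFeasible (Zstack Zb * (Zstack Zb)ᵀ) := by
  constructor
  · have := Matrix.posSemidef_self_mul_conjTranspose (Zstack Zb)
    rwa [Matrix.conjTranspose_eq_transpose_of_trivial] at this
  · ext ⟨i, a⟩ ⟨j, b⟩
    by_cases h : i = j
    · subst h
      by_cases hab : a = b
      · subst hab
        simp [SBD, Matrix.mul_apply, Zstack, Z_rows hZb]
      · simp [SBD, Matrix.mul_apply, Zstack, Z_rows hZb, Matrix.one_apply, hab, Ne.symm hab]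
    · simp [SBD, h, Matrix.one_apply]

lemma ZtZ (hZb : ∀ i, Zb i * (Zb i)ᵀ = 1) :
    (Zstack Zb)ᵀ * Zstack Zb = (n : ℝ) • (1 : Matrix (Fin r) (Fin r) ℝ) := by
  ext a b
  simp [Matrix.mul_apply, Zstack, Fintype.sum_prod_type, Z_cols hZb, Matrix.one_apply]

lemma DDt (hZb : ∀ i, Zb i * (Zb i)ᵀ = 1) : Dmat Zb * (Dmat Zb)ᵀ = 1 := by
  ext ⟨i, a⟩ ⟨j, b⟩
  by_cases h : i = j
  · subst h
    simp [Matrix.mul_apply, Dmat, Fintype.sum_prod_type, Z_rows hZb, Matrix.one_apply]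
  · simp [Matrix.mul_apply, Dmat, Fintype.sum_prod_type, Matrix.one_apply, h, Ne.symm h]

lemma DtZ (hZb : ∀ i, Zb i * (Zb i)ᵀ = 1) :
    (Dmat Zb)ᵀ * Zstack Zb = Matrix.of fun q b => if q.2 = b then (1:ℝ) else 0 := by
  ext ⟨i, a⟩ b
  simp [Matrix.mul_apply, Dmat, Zstack, Fintype.sum_prod_type, Z_cols hZb]

lemma LZ_mul_Z (G : SimpleGraph (Fin n)) [DecidableRel G.Adj]
    (hZb : ∀ i, Zb i * (Zb i)ᵀ = 1) : LZmat (G.lapMatrix ℝ) Zb * Zstack Zb = 0 := by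
  have hL : ∀ i, ∑ j, G.lapMatrix ℝ i j = 0 := by
    intro i
    have := congrFun (SimpleGraph.lapMatrix_mulVec_const_eq_zero (R := ℝ) G) i
    simpa [mulVec, dotProduct] using this
  rw [LZmat, Matrix.mul_assoc, DtZ hZb, Matrix.mul_assoc]
  have : (G.lapMatrix ℝ ⊗ₖ (1 : Matrix (Fin r) (Fin r) ℝ)) *
      (Matrix.of fun (q : Fin n × Fin r) b => if q.2 = b then (1:ℝ) else 0) = 0 := by
    ext ⟨i, a⟩ b
    simp [Matrix.mul_apply, Fintype.sum_prod_type, Matrix.one_apply, hL, ← Finset.sum_mul]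
  rw [this, Matrix.mul_zero]

lemma LZ_quad (L : Matrix (Fin n) (Fin n) ℝ) (b : Fin n × Fin r → ℝ) :
    b ⬝ᵥ (LZmat L Zb *ᵥ b) = ∑ a, (fun i => ((Dmat Zb)ᵀ *ᵥ b) (i, a)) ⬝ᵥ
      (L *ᵥ fun i => ((Dmat Zb)ᵀ *ᵥ b) (i, a)) := by
  set c := (Dmat Zb)ᵀ *ᵥ b with hc
  have h1 : b ⬝ᵥ (LZmat L Zb *ᵥ b) = c ⬝ᵥ ((L ⊗ₖ (1 : Matrix (Fin r) (Fin r) ℝ)) *ᵥ c) := by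
    rw [LZmat, ← mulVec_mulVec, ← mulVec_mulVec, dotProduct_mulVec, ← mulVec_transpose, ← hc]
  rw [h1]
  simp only [dotProduct, mulVec, Fintype.sum_prod_type, kroneckerMap_apply, Matrix.one_apply]
  rw [Finset.sum_comm]
  simp

lemma LZ_lower (hn : 1 ≤ n) (G : SimpleGraph (Fin n)) [DecidableRel G.Adj]
    (hZb : ∀ i, Zb i * (Zb i)ᵀ = 1) (b : Fin n × Fin r → ℝ) :
    lam2 (G.lapMatrix ℝ) * (b ⬝ᵥ b - (b ⬝ᵥ ((Zstack Zb * (Zstack Zb)ᵀ) *ᵥ b)) / n) ≤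
      b ⬝ᵥ (LZmat (G.lapMatrix ℝ) Zb *ᵥ b) := by
  rw [LZ_quad]
  set c := (Dmat Zb)ᵀ *ᵥ b with hc
  have h1 : b ⬝ᵥ b = ∑ a, ∑ i, c (i, a) ^ 2 := by
    have : c ⬝ᵥ c = b ⬝ᵥ b := by
      rw [hc, dotProduct_mulVec, vecMul_transpose, mulVec_mulVec, DDt hZb, one_mulVec]
    rw [← this, Finset.sum_comm]
    simp [dotProduct, Fintype.sum_prod_type, pow_two]
  have h2 : ∀ a, ∑ i, c (i, a) = ((Zstack Zb)ᵀ *ᵥ b) a := by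
    intro a
    simp [hc, mulVec, dotProduct, Dmat, Zstack, Fintype.sum_prod_type]
  have h3 : b ⬝ᵥ ((Zstack Zb * (Zstack Zb)ᵀ) *ᵥ b) = ∑ a, (∑ i, c (i, a)) ^ 2 := by
    rw [← mulVec_mulVec, dotProduct_mulVec, ← mulVec_transpose]
    simp [h2, dotProduct, pow_two]
  rw [h1, h3, Finset.sum_div, ← Finset.sum_sub_distrib, Finset.mul_sum]
  exact Finset.sum_le_sum fun a _ => lam2_le G hn fun i => c (i, a)

end blocks

theorem sdp_error_bound
    (n r : ℕ) (hn : 1 ≤ n) (hr : 1 ≤ r)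
    (G : SimpleGraph (Fin n)) [DecidableRel G.Adj] (hG : G.Connected)
    (Zb : Fin n → Matrix (Fin r) (Fin r) ℝ) (hZb : ∀ i, Zb i * (Zb i)ᵀ = 1)
    (Δ : Matrix (Fin n × Fin r) (Fin n × Fin r) ℝ) (hΔsym : Δᵀ = Δ)
    (hΔsupp : ∀ q q' : Fin n × Fin r, ¬ G.Adj q.1 q'.1 → Δ q q' = 0)
    (Lhat : Matrix (Fin n × Fin r) (Fin n × Fin r) ℝ)
    (hLhat : Lhat = LZmat (G.lapMatrix ℝ) Zb - Δ)
    (X : Matrix (Fin n × Fin r) (Fin n × Fin r) ℝ) (hX : SDPFeasible X)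
    (hXopt : ∀ X' : Matrix (Fin n × Fin r) (Fin n × Fin r) ℝ, SDPFeasible X' →
      ip Lhat X ≤ ip Lhat X') :
    (X * (Zstack Zb * (Zstack Zb)ᵀ)ᵀ).trace ≥
      (1 - 4 * opNorm Δ ^ 2 / lam2 (G.lapMatrix ℝ) ^ 2) * ((n : ℝ) ^ 2 * r) := by
  have hZf := Z_feas hZb
  have hZt : (Zstack Zb * (Zstack Zb)ᵀ)ᵀ = Zstack Zb * (Zstack Zb)ᵀ := by
    rw [transpose_mul, transpose_transpose]
  have hXs : Xᵀ = X := by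
    have := hX.1.1
    rwa [Matrix.IsHermitian, Matrix.conjTranspose_eq_transpose_of_trivial] at this
  rw [hZt, ge_iff_le]
  have hq0 : 0 ≤ 4 * opNorm Δ ^ 2 / lam2 (G.lapMatrix ℝ) ^ 2 := by positivity
  set f := (X * (Zstack Zb * (Zstack Zb)ᵀ)).trace with hf
  have hn0 : (0:ℝ) < n := by exact_mod_cast hn
  have hr0 : (0:ℝ) < r := by exact_mod_cast hr
  have htriv : (n:ℝ) ^ 2 * r ≤ f →
      (1 - 4 * opNorm Δ ^ 2 / lam2 (G.lapMatrix ℝ) ^ 2) * ((n : ℝ) ^ 2 * r) ≤ f := by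
    intro h
    have : 0 ≤ 4 * opNorm Δ ^ 2 / lam2 (G.lapMatrix ℝ) ^ 2 * ((n : ℝ) ^ 2 * r) := by positivity
    linarith
  rcases Nat.lt_or_ge n 2 with h1 | h2
  · apply htriv
    have : n = 1 := by omega
    subst this
    have hX1 : X = 1 := by
      ext ⟨i, a⟩ ⟨j, b⟩
      obtain rfl : i = j := Subsingleton.elim _ _
      rw [feas_block hX]; simp [Matrix.one_apply]
    rw [hf, hX1, one_mul, feas_trace hZf]
    simp
  set lam := lam2 (G.lapMatrix ℝ) with hlam
  have hlam0 : 0 < lam := lam2_pos G h2 hG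
  set LZ := LZmat (G.lapMatrix ℝ) Zb with hLZ
  -- optimality
  have hopt : (LZ * X).trace ≤ (Δ * (X - Zstack Zb * (Zstack Zb)ᵀ)).trace := by
    have h := hXopt _ hZf
    simp only [ip, hZt, hXs, hLhat, sub_mul, trace_sub] at h
    have h0 : LZ * (Zstack Zb * (Zstack Zb)ᵀ) = 0 := by
      rw [← Matrix.mul_assoc, LZ_mul_Z G hZb, Matrix.zero_mul]
    rw [h0, trace_zero] at h
    rw [mul_sub, trace_sub]
    linarith
  -- spectral gap
  have hLZs : LZᵀ = LZ := by
    have hK : (G.lapMatrix ℝ ⊗ₖ (1 : Matrix (Fin r) (Fin r) ℝ))ᵀ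
        = G.lapMatrix ℝ ⊗ₖ (1 : Matrix (Fin r) (Fin r) ℝ) := by
      rw [← kroneckerMap_transpose, transpose_one,
        (SimpleGraph.isSymm_lapMatrix (R := ℝ) (G := G)).eq]
    rw [hLZ, LZmat]
    simp only [transpose_mul, transpose_transpose, hK, Matrix.mul_assoc]
  have hgap : lam * (n * r - f / n) ≤ (LZ * X).trace := by
    have hP : (LZ - lam • (1 - (n:ℝ)⁻¹ • (Zstack Zb * (Zstack Zb)ᵀ))).PosSemidef := by
      apply Matrix.PosSemidef.of_dotProduct_mulVec_nonneg
      · rw [Matrix.IsHermitian, Matrix.conjTranspose_eq_transpose_of_trivial]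
        simp only [transpose_sub, transpose_smul, transpose_one, hZt, hLZs]
      · intro b
        have := LZ_lower hn G hZb b
        simp only [star_trivial, sub_mulVec, smul_mulVec, dotProduct_sub, dotProduct_smul,
          one_mulVec, smul_eq_mul]
        rw [div_eq_inv_mul] at this
        linarith
    have h := psd_trace_mul_nonneg hP hX.1
    simp only [sub_mul, smul_mul_assoc, one_mul, trace_sub, trace_smul, smul_eq_mul,
      feas_trace hX] at h
    rw [trace_mul_comm (Zstack Zb * (Zstack Zb)ᵀ) X, ← hf] at h
    rw [div_eq_inv_mul]
    linarith
  obtain ⟨S, hS1, hS2⟩ := core hX.1 hΔsym (feas_le hX) hn0.le (feas_trace hX) (Zstack Zb) (ZtZ hZb)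
  rw [← hf] at hS2
  set u := (n:ℝ) ^ 2 * r - f with hu
  rcases le_or_gt u 0 with hu0 | hu0
  · exact htriv (by linarith)
  have hk : lam * u ≤ n * (opNorm Δ * S) := by
    have e : lam * u = n * (lam * (n * r - f / n)) := by rw [hu]; field_simp
    rw [e]
    exact mul_le_mul_of_nonneg_left (by linarith) hn0.le
  have hsq : (lam * u) ^ 2 ≤ n ^ 2 * opNorm Δ ^ 2 * (4 * r * u) := by
    calc (lam * u) ^ 2 ≤ (n * (opNorm Δ * S)) ^ 2 := by
          apply pow_le_pow_left₀ (by positivity) hk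
      _ = n ^ 2 * opNorm Δ ^ 2 * S ^ 2 := by ring
      _ ≤ _ := by gcongr
  have hfin : lam ^ 2 * u ≤ 4 * opNorm Δ ^ 2 * (n ^ 2 * r) := by
    refine le_of_mul_le_mul_right ?_ hu0
    linarith
  have hl2 : 0 < lam ^ 2 := by positivity
  have : u ≤ 4 * opNorm Δ ^ 2 / lam ^ 2 * (n ^ 2 * r) := by
    rw [div_mul_eq_mul_div, le_div_iff₀ hl2]
    linarith
  linarith

end SyncPaper
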